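/- Fix a network architecture (n₀,…,n_m,1) with total parameter count D. There exists a nonzero polynomial P in the n₀ + D variables (x, s) such that the parametrized ReLU network family 𝓕: ℝ^{n₀} × ℝ^D → ℝ, sending (x, s) to the output of the architecture with weights/biases s evaluated at input x, is smooth (locally polynomial) on the complement of the zero set of P. In particular, 𝓕 is smooth outside a closed Lebesgue-null set. -/

import Mathlib

open Matrix

/-- The composition of the first `k` ReLU layer maps of a feedforward network with layer
dimensions `d 0, d 1, d 2, …`, weight matrices `W` and biases `b`. -/
def forward (d : ℕ → ℕ) (W : ∀ k, Matrix (Fin (d (k + 1))) (Fin (d k)) ℝ)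
    (b : ∀ k, Fin (d (k + 1)) → ℝ) : (k : ℕ) → (Fin (d 0) → ℝ) → Fin (d k) → ℝ
  | 0, x => x
  | k + 1, x => fun i => max ((W k).mulVec (forward d W b k x) i + b k i) 0

/-- The parameter space of the architecture `(d 0, …, d m, 1)`: all weight matrices and
bias vectors of the `m` hidden layers together with the weights and bias of the final
affine map.  (A finite-dimensional real vector space of dimension `D(d 0,…,d m,1)`.) -/
abbrev ParamSpace (d : ℕ → ℕ) (m : ℕ) : Type :=
  (∀ k : Fin m, Fin (d (k.1 + 1)) → Fin (d k.1) → ℝ) ×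
  (∀ k : Fin m, Fin (d (k.1 + 1)) → ℝ) × (Fin (d m) → ℝ) × ℝ

/-- The parametrized family of ReLU networks of architecture `(d 0, …, d m, 1)`,
as a function of the pair (input, parameter). -/
noncomputable def netFamily (d : ℕ → ℕ) (m : ℕ)
    (z : (Fin (d 0) → ℝ) × ParamSpace d m) : ℝ :=
  z.2.2.2.1 ⬝ᵥ forward d
    (fun k => if h : k < m then Matrix.of (z.2.1 ⟨k, h⟩) else 0)
    (fun k => if h : k < m then z.2.2.1 ⟨k, h⟩ else 0) m z.1 + z.2.2.2.2

/-- A real polynomial function on a real vector space: an element of the subalgebra of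
functions generated by the linear functionals (for `E = ℝ^{n₀} × ℝ^D` these are exactly
the polynomials in the `n₀ + D` coordinate variables). -/
def IsPolyFun {E : Type*} [AddCommGroup E] [Module ℝ E] (g : E → ℝ) : Prop :=
  g ∈ Algebra.adjoin ℝ {f : E → ℝ | IsLinearMap ℝ f}

theorem IsPolyFun.line {E : Type*} [AddCommGroup E] [Module ℝ E] {g : E → ℝ}
    (hg : IsPolyFun g) (a v : E) : ∃ p : Polynomial ℝ, ∀ t : ℝ, g (a + t • v) = p.eval t := by
  unfold IsPolyFun at hg
  induction hg using Algebra.adjoin_induction with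
  | mem f hf =>
    have hf' : IsLinearMap ℝ f := hf
    refine ⟨Polynomial.C (f a) + Polynomial.X * Polynomial.C (f v), fun t => ?_⟩
    simp [hf'.map_add, hf'.map_smul]; ring
  | algebraMap r => exact ⟨Polynomial.C r, fun t => by simp⟩
  | add f g _ _ ihf ihg =>
    obtain ⟨p, hp⟩ := ihf
    obtain ⟨q, hq⟩ := ihg
    exact ⟨p + q, fun t => by simp [hp, hq]⟩
  | mul f g _ _ ihf ihg =>
    obtain ⟨p, hp⟩ := ihf
    obtain ⟨q, hq⟩ := ihg
    exact ⟨p * q, fun t => by simp [hp, hq]⟩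

theorem IsPolyFun.continuous {E : Type*} [NormedAddCommGroup E] [NormedSpace ℝ E]
    [FiniteDimensional ℝ E] {g : E → ℝ} (hg : IsPolyFun g) : Continuous g := by
  unfold IsPolyFun at hg
  induction hg using Algebra.adjoin_induction with
  | mem f hf => exact (IsLinearMap.mk' f hf).continuous_of_finiteDimensional
  | algebraMap r => exact continuous_const
  | add f g _ _ ihf ihg => exact ihf.add ihg
  | mul f g _ _ ihf ihg => exact ihf.mul ihg

theorem IsPolyFun.null {E : Type*} [NormedAddCommGroup E] [NormedSpace ℝ E]
    [FiniteDimensional ℝ E] [MeasurableSpace E] [BorelSpace E]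
    (μ : MeasureTheory.Measure E) [μ.IsAddHaarMeasure] {g : E → ℝ} (hg : IsPolyFun g)
    (a : E) (ha : g a ≠ 0) : μ {z | g z = 0} = 0 := by
  have hc := hg.continuous
  have h1 : ∀ᵐ x ∂μ, ∀ᵐ t : ℝ, g (a + t • x) ≠ 0 := by
    refine Filter.Eventually.of_forall fun x => ?_
    obtain ⟨p, hp⟩ := hg.line a x
    have hp0 : p ≠ 0 := by
      rintro rfl
      have := hp 0
      simp at this
      exact ha this
    rw [MeasureTheory.ae_iff]
    refine Set.Finite.measure_zero (p.rootSet_finite ℝ |>.subset ?_) _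
    intro t ht
    have ht' : g (a + t • x) = 0 := by simpa using ht
    rw [Polynomial.mem_rootSet]
    refine ⟨hp0, ?_⟩
    rw [hp] at ht'
    simpa using ht'
  rw [MeasureTheory.Measure.ae_ae_comm] at h1
  · have h2 : ∀ᵐ t : ℝ, t ≠ 0 := by
      simp [MeasureTheory.ae_iff]
    obtain ⟨t, ht, ht0⟩ := (h1.and h2).exists
    rw [MeasureTheory.ae_iff] at ht
    have e : {x | ¬ g (a + t • x) ≠ 0} = (fun x => t • x) ⁻¹' ((fun x => a + x) ⁻¹' {z | g z = 0}) := by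
      ext x; simp
    rw [e, MeasureTheory.Measure.addHaar_preimage_smul μ ht0, MeasureTheory.measure_preimage_add] at ht
    rcases mul_eq_zero.1 ht with h | h
    · exfalso
      rw [ENNReal.ofReal_eq_zero] at h
      have : 0 < |(t ^ Module.finrank ℝ E)⁻¹| := by positivity
      linarith
    · exact h
  · have : IsOpen {x : E × ℝ | g (a + x.2 • x.1) ≠ 0} := by
      apply isOpen_ne_fun
      · exact hc.comp (by fun_prop)
      · exact continuous_const
    exact this.measurableSet

theorem IsPolyFun.of_linear {E : Type*} [AddCommGroup E] [Module ℝ E] {g : E → ℝ}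
    (hg : IsLinearMap ℝ g) : IsPolyFun g := Algebra.subset_adjoin hg

theorem IsPolyFun.add {E : Type*} [AddCommGroup E] [Module ℝ E] {f g : E → ℝ}
    (hf : IsPolyFun f) (hg : IsPolyFun g) : IsPolyFun (fun z => f z + g z) :=
  Subalgebra.add_mem _ hf hg

theorem IsPolyFun.mul {E : Type*} [AddCommGroup E] [Module ℝ E] {f g : E → ℝ}
    (hf : IsPolyFun f) (hg : IsPolyFun g) : IsPolyFun (fun z => f z * g z) :=
  Subalgebra.mul_mem _ hf hg

theorem IsPolyFun.const {E : Type*} [AddCommGroup E] [Module ℝ E] (r : ℝ) :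
    IsPolyFun (fun _ : E => r) :=
  Subalgebra.algebraMap_mem (Algebra.adjoin ℝ {f : E → ℝ | IsLinearMap ℝ f}) r

theorem IsPolyFun.sum {E ι : Type*} [AddCommGroup E] [Module ℝ E] (s : Finset ι) {f : ι → E → ℝ}
    (hf : ∀ i, IsPolyFun (f i)) : IsPolyFun (fun z => ∑ i ∈ s, f i z) := by
  have := Subalgebra.sum_mem (Algebra.adjoin ℝ {f : E → ℝ | IsLinearMap ℝ f})
    (t := s) (f := f) (fun i _ => hf i)
  unfold IsPolyFun
  convert this using 1
  ext z; simp

theorem IsPolyFun.prod {E ι : Type*} [AddCommGroup E] [Module ℝ E] (s : Finset ι) {f : ι → E → ℝ}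
    (hf : ∀ i, IsPolyFun (f i)) : IsPolyFun (fun z => ∏ i ∈ s, f i z) := by
  have := Subalgebra.prod_mem (Algebra.adjoin ℝ {f : E → ℝ | IsLinearMap ℝ f})
    (t := s) (f := f) (fun i _ => hf i)
  unfold IsPolyFun
  convert this using 1
  ext z; simp

/-- The hidden activations after `k` layers, as a function of (input, parameter). -/
noncomputable def hiddenAct (d : ℕ → ℕ) (m k : ℕ)
    (z : (Fin (d 0) → ℝ) × ParamSpace d m) : Fin (d k) → ℝ :=
  forward d
    (fun k => if h : k < m then Matrix.of (z.2.1 ⟨k, h⟩) else 0)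
    (fun k => if h : k < m then z.2.2.1 ⟨k, h⟩ else 0) k z.1

theorem hiddenAct_succ (d : ℕ → ℕ) (m k : ℕ) (h : k < m)
    (z : (Fin (d 0) → ℝ) × ParamSpace d m) (i : Fin (d (k + 1))) :
    hiddenAct d m (k + 1) z i =
      max ((∑ j, z.2.1 ⟨k, h⟩ i j * hiddenAct d m k z j) + z.2.2.1 ⟨k, h⟩ i) 0 := by
  simp [hiddenAct, forward, h, Matrix.mulVec, dotProduct]

/-- A base point: zero weights, all hidden biases equal to one. -/
def basePt (d : ℕ → ℕ) (m : ℕ) : (Fin (d 0) → ℝ) × ParamSpace d m :=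
  (0, 0, fun _ _ => 1, 0, 0)

theorem hiddenAct_poly (d : ℕ → ℕ) (m k : ℕ) (hk : k ≤ m) :
    ∃ (P : (Fin (d 0) → ℝ) × ParamSpace d m → ℝ) (ι : Type) (_ : Fintype ι)
      (q : ι → Fin (d k) → (Fin (d 0) → ℝ) × ParamSpace d m → ℝ),
      IsPolyFun P ∧ P (basePt d m) ≠ 0 ∧ (∀ a i, IsPolyFun (q a i)) ∧
      ∀ z, P z ≠ 0 → ∃ a, ∀ᶠ y in nhds z, ∀ i, hiddenAct d m k y i = q a i y := by
  induction k with
  | zero =>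
    refine ⟨fun _ => 1, Unit, inferInstance, fun _ i z => z.1 i, IsPolyFun.const 1, by simp,
      fun _ i => IsPolyFun.of_linear ⟨fun _ _ => rfl, fun _ _ => rfl⟩, fun z _ => ⟨(), ?_⟩⟩
    exact Filter.Eventually.of_forall fun y i => rfl
  | succ k ih =>
    obtain ⟨P, ι, _, q, hP, hP0, hq, hloc⟩ := ih (by omega)
    have h : k < m := by omega
    let r : ι → Fin (d (k + 1)) → (Fin (d 0) → ℝ) × ParamSpace d m → ℝ := fun a i z =>
      (∑ j, z.2.1 ⟨k, h⟩ i j * q a j z) + z.2.2.1 ⟨k, h⟩ i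
    have hr : ∀ a i, IsPolyFun (r a i) := fun a i =>
      (IsPolyFun.sum _ fun j => IsPolyFun.mul
        (IsPolyFun.of_linear ⟨fun _ _ => rfl, fun _ _ => rfl⟩) (hq a j)).add
        (IsPolyFun.of_linear ⟨fun _ _ => rfl, fun _ _ => rfl⟩)
    have hr0 : ∀ a i, r a i (basePt d m) = 1 := fun a i => by simp [r, basePt]
    refine ⟨fun z => P z * ∏ a, ∏ i, r a i z, ι × (Fin (d (k + 1)) → Bool), inferInstance,
      fun a i z => if a.2 i then r a.1 i z else 0,
      hP.mul (IsPolyFun.prod _ fun a => IsPolyFun.prod _ fun i => hr a i), ?_, ?_, ?_⟩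
    · simp [hr0, hP0]
    · rintro ⟨a, ε⟩ i
      cases hε : ε i
      · simpa [hε] using IsPolyFun.const 0
      · simpa [hε] using hr a i
    · intro z hz
      have hz1 : P z ≠ 0 := left_ne_zero_of_mul hz
      have hz2 : ∀ a i, r a i z ≠ 0 := by
        have := right_ne_zero_of_mul hz
        intro a i
        exact Finset.prod_ne_zero_iff.1 (Finset.prod_ne_zero_iff.1 this a (Finset.mem_univ _)) i
          (Finset.mem_univ _)
      obtain ⟨a, ha⟩ := hloc z hz1
      refine ⟨(a, fun i => decide (0 < r a i z)), ?_⟩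
      have hs : ∀ᶠ y in nhds z, ∀ i, max (r a i y) 0 = if 0 < r a i z then r a i y else 0 := by
        rw [Filter.eventually_all]
        intro i
        have hc : ContinuousAt (r a i) z := (hr a i).continuous.continuousAt
        rcases lt_or_gt_of_ne (hz2 a i) with hlt | hgt
        · filter_upwards [hc.eventually_lt_const hlt] with y hy
          rw [if_neg hlt.not_gt, max_eq_right hy.le]
        · filter_upwards [hc.eventually_const_lt hgt] with y hy
          rw [if_pos hgt, max_eq_left hy.le]
      filter_upwards [ha, hs] with y hy hys i
      rw [hiddenAct_succ d m k h]
      simp only [hy, decide_eq_true_eq]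
      exact hys i

/-- For a fixed architecture `(n₀,…,n_m,1)` with total parameter count
`D`, there is a nonzero polynomial `P` in the `n₀ + D` variables `(x, s)` such that the
parametrized family `𝓕 : ℝ^{n₀} × ℝ^D → ℝ` is smooth (locally polynomial) on the
complement of the zero set of `P`; in particular `𝓕` is smooth off a closed Lebesgue
null set. -/
theorem relu_family_smooth_off_algebraic_set (d : ℕ → ℕ) (m : ℕ) :
    ∃ P : (Fin (d 0) → ℝ) × ParamSpace d m → ℝ,
      IsPolyFun P ∧ P ≠ 0 ∧
      IsClosed {z | P z = 0} ∧
      MeasureTheory.volume {z | P z = 0} = 0 ∧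
      ∀ z, P z ≠ 0 → ∃ U ∈ nhds z, ∃ Q : (Fin (d 0) → ℝ) × ParamSpace d m → ℝ,
        IsPolyFun Q ∧ ∀ y ∈ U, netFamily d m y = Q y := by
  obtain ⟨P, ι, _, q, hP, hP0, hq, hloc⟩ := hiddenAct_poly d m m le_rfl
  have i1 : (MeasureTheory.volume : MeasureTheory.Measure
      (∀ k : Fin m, Fin (d (k.1 + 1)) → Fin (d k.1) → ℝ)).IsAddHaarMeasure := by
    have j (k : Fin m) : (MeasureTheory.volume : MeasureTheory.Measure
      (Fin (d (k.1 + 1)) → Fin (d k.1) → ℝ)).IsAddHaarMeasure := by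
      exact MeasureTheory.Measure.pi.isAddHaarMeasure _
    exact MeasureTheory.Measure.pi.isAddHaarMeasure _
  have i2 : (MeasureTheory.volume : MeasureTheory.Measure
      (∀ k : Fin m, Fin (d (k.1 + 1)) → ℝ)).IsAddHaarMeasure :=
    MeasureTheory.Measure.pi.isAddHaarMeasure _
  have i3 : (MeasureTheory.volume : MeasureTheory.Measure
      ((Fin (d m) → ℝ) × ℝ)).IsAddHaarMeasure :=
    MeasureTheory.Measure.prod.instIsAddHaarMeasure _ _
  have i4 : (MeasureTheory.volume : MeasureTheory.Measure
      ((∀ k : Fin m, Fin (d (k.1 + 1)) → ℝ) × (Fin (d m) → ℝ) × ℝ)).IsAddHaarMeasure :=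
    MeasureTheory.Measure.prod.instIsAddHaarMeasure _ _
  have i5 : (MeasureTheory.volume : MeasureTheory.Measure (ParamSpace d m)).IsAddHaarMeasure :=
    MeasureTheory.Measure.prod.instIsAddHaarMeasure _ _
  have b1 : BorelSpace (∀ k : Fin m, Fin (d (k.1 + 1)) → Fin (d k.1) → ℝ) := inferInstance
  have b5 : BorelSpace (ParamSpace d m) := inferInstance
  have c5 : ContinuousAdd (ParamSpace d m) := inferInstance
  have a5 : MeasurableAdd (ParamSpace d m) := ContinuousAdd.measurableAdd
  have i6 : (MeasureTheory.volume : MeasureTheory.Measure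
      ((Fin (d 0) → ℝ) × ParamSpace d m)).IsAddHaarMeasure :=
    MeasureTheory.Measure.prod.instIsAddHaarMeasure _ _
  refine ⟨P, hP, fun h => hP0 (by simp [h]), isClosed_eq hP.continuous continuous_const,
    hP.null _ _ hP0, fun z hz => ?_⟩
  obtain ⟨a, ha⟩ := hloc z hz
  refine ⟨_, ha, fun y => (∑ i, y.2.2.2.1 i * q a i y) + y.2.2.2.2,
    (IsPolyFun.sum _ fun j => IsPolyFun.mul
        (IsPolyFun.of_linear ⟨fun _ _ => rfl, fun _ _ => rfl⟩) (hq a j)).add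
        (IsPolyFun.of_linear ⟨fun _ _ => rfl, fun _ _ => rfl⟩), fun y hy => ?_⟩
  have hy' : ∀ i, hiddenAct d m m y i = q a i y := hy
  simp only [← hy']
  rfl
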